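/- In every non-idempotent Kleene algebra, the product-star identity holds: for all elements p, q, 1 + p·(q·p)*·q = (p·q)*. -/

import Mathlib

/-!
The inequality `1 + p * p⋆ ≤ p⋆` is an equality (`one_add_mul_star`), because `1 + p * p⋆` is itself
a pre-fixed point of `x ↦ 1 + p * x`. Left induction then gives half of the sliding law,
`(p * q)⋆ * p ≤ p * (q * p)⋆`; its instance `q = 1` yields the right-handed unfolding
`1 + p⋆ * p ≤ p⋆`, with which right induction gives the other half. By sliding,
`1 + p * (q * p)⋆ * q = 1 + (p * q)⋆ * (p * q)`, and sliding once more with `q = 1` turns this into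
the left unfolding of `(p * q)⋆`. Idempotence of `+` is never needed.
-/

/-- A non-idempotent Kleene algebra (NKA): a (not necessarily additively
idempotent) semiring equipped with a partial order preserved by `+` and `*`,
and a star operation satisfying `1 + p * p⋆ ≤ p⋆` and the two induction laws. -/
class NKA (K : Type*) extends Semiring K, PartialOrder K where
  star : K → K
  add_le_add' : ∀ {p q r s : K}, p ≤ q → r ≤ s → p + r ≤ q + s
  mul_le_mul' : ∀ {p q r s : K}, p ≤ q → r ≤ s → p * r ≤ q * s
  one_add_mul_star_le : ∀ p : K, 1 + p * star p ≤ star p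
  star_ind_left : ∀ {p q r : K}, q + p * r ≤ r → star p * q ≤ r
  star_ind_right : ∀ {p q r : K}, q + r * p ≤ r → q * star p ≤ r

postfix:max "⋆" => NKA.star

namespace NKA

variable {K : Type*} [NKA K]

theorem one_add_mul_star (p : K) : 1 + p * p⋆ = p⋆ := by
  refine le_antisymm (one_add_mul_star_le p) ?_
  have h : p⋆ * 1 ≤ 1 + p * p⋆ :=
    star_ind_left (add_le_add' le_rfl (mul_le_mul' le_rfl (one_add_mul_star_le p)))
  rwa [mul_one] at h

theorem star_mul_le_mul_star (p q : K) : (p * q)⋆ * p ≤ p * (q * p)⋆ := by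
  apply star_ind_left
  have h : p + p * q * (p * (q * p)⋆) = p * (1 + q * p * (q * p)⋆) := by
    rw [mul_add, mul_one]
    simp only [mul_assoc]
  rw [h, one_add_mul_star]

theorem one_add_star_mul_le (p : K) : 1 + p⋆ * p ≤ p⋆ := by
  have h := star_mul_le_mul_star p 1
  rw [mul_one, one_mul] at h
  exact (add_le_add' le_rfl h).trans (one_add_mul_star_le p)

/-- The sliding law. -/
theorem mul_star_eq_star_mul (p q : K) : p * (q * p)⋆ = (p * q)⋆ * p := by
  refine le_antisymm (star_ind_right ?_) (star_mul_le_mul_star p q)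
  have h : p + (p * q)⋆ * p * (q * p) = (1 + (p * q)⋆ * (p * q)) * p := by
    rw [add_mul, one_mul]
    simp only [mul_assoc]
  rw [h]
  exact mul_le_mul' (one_add_star_mul_le _) le_rfl

end NKA

/-- Product-star identity in any non-idempotent Kleene algebra. -/
theorem nka_product_star {K : Type*} [NKA K] (p q : K) :
    1 + p * (q * p)⋆ * q = (p * q)⋆ := by
  have h := NKA.mul_star_eq_star_mul (p * q) 1
  rw [mul_one, one_mul] at h
  rw [NKA.mul_star_eq_star_mul, mul_assoc, ← h, NKA.one_add_mul_star]
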